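/- For every n ∈ ℕ and every column index 0 ≤ m ≤ 2ℓ, the column sums of P_n evaluated at the point (q+q⁻¹)/2 equal one: Σ_{k=0}^{2ℓ} P_n((q+q⁻¹)/2)_{k,m} = 1. -/

import Mathlib

open Finset Polynomial MeasureTheory Matrix
open scoped BigOperators ComplexOrder

noncomputable section

/-- q-shifted factorial `(a;p)_n`. -/
def qp (a p : ℂ) (n : ℕ) : ℂ := ∏ j ∈ Finset.range n, (1 - a * p ^ j)

/-- q-Racah polynomial `R_n(μ(x);α,β,γ,δ;p)`. -/
def qRacah (p α β γ δ : ℂ) (n x : ℕ) : ℂ :=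
  ∑ k ∈ Finset.range (min n x + 1),
    qp (p ^ (-(n : ℤ))) p k * qp (α * β * p ^ (n + 1)) p k *
        qp (p ^ (-(x : ℤ))) p k * qp (γ * δ * p ^ (x + 1)) p k /
      (qp (α * p) p k * qp (β * δ * p) p k * qp (γ * p) p k * qp p p k) * p ^ k

/-- `IsUltra C` says that for each base `p`, parameter `β` and degree `n`, `C p β n` is
the continuous q-ultraspherical polynomial: it has degree at most `n` and its values at
`(z+z⁻¹)/2` are given by the symmetric Laurent sum. -/
def IsUltra (C : ℂ → ℂ → ℕ → Polynomial ℂ) : Prop :=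
  ∀ (p β : ℂ) (n : ℕ),
    (C p β n).degree ≤ (n : ℕ) ∧
      ∀ z : ℂ, z ≠ 0 →
        (C p β n).eval ((z + z⁻¹) / 2) =
          ∑ r ∈ Finset.range (n + 1),
            qp β p r * qp β p (n - r) / (qp p p r * qp p p (n - r)) * z ^ ((n : ℤ) - 2 * r)

/-- The matrix-valued polynomial `P_n` (entries in `Polynomial ℂ`); here `L = 2ℓ`. -/
def Pm (q : ℂ) (L : ℕ) (C : ℂ → ℂ → ℕ → Polynomial ℂ) (n : ℕ) :
    Matrix (Fin (L + 1)) (Fin (L + 1)) (Polynomial ℂ) :=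
  Matrix.of fun i j =>
    ∑ k ∈ Finset.Icc (i : ℕ) (min L (n + (j : ℕ))),
      Polynomial.C
          ((-1 : ℂ) ^ k *
            q ^ ((n : ℤ) + (2 * (k : ℤ) + 1) * ((k : ℤ) - ((i : ℕ) : ℤ)) +
                ((j : ℕ) : ℤ) * (2 * (k : ℤ) + 1) + 2 * (k : ℤ) * ((L : ℤ) + (n : ℤ) + 1) -
                (k : ℤ) ^ 2) *
            (qp (q ^ 2) (q ^ 2) k * qp (q ^ 2) (q ^ 2) (k + (i : ℕ)) /
              (qp (q ^ 2) (q ^ 2) (2 * k) * qp (q ^ 2) (q ^ 2) (i : ℕ))) *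
            (qp (q ^ (-(2 * (L : ℤ)))) (q ^ 2) k *
                qp (q ^ (-(2 * ((j : ℕ) : ℤ) + 2 * (n : ℤ)))) (q ^ 2) k /
              (qp (q ^ 2) (q ^ 2) k * qp (q ^ (2 * (L : ℤ) + 4)) (q ^ 2) k)) *
            (qp (q ^ 2) (q ^ 2) (n + (j : ℕ) - k) /
              qp (q ^ (4 * (k : ℤ) + 4)) (q ^ 2) (n + (j : ℕ) - k)) *
            qRacah (q ^ 2) 1 1 (q ^ (-(2 * (n : ℤ) + 2 * ((j : ℕ) : ℤ) + 2)))
              (q ^ (-(2 * (L : ℤ) + 2))) k (j : ℕ)) *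
        (C (q ^ 2) (q ^ (-(2 * (k : ℤ)))) (k - (i : ℕ)) *
          C (q ^ 2) (q ^ (2 * (k : ℤ) + 2)) (n + (j : ℕ) - k))

/-- Evaluation of the matrix-valued polynomial `P_n` at a point. -/
def evP (q : ℂ) (L : ℕ) (C : ℂ → ℂ → ℕ → Polynomial ℂ) (n : ℕ) (x : ℂ) :
    Matrix (Fin (L + 1)) (Fin (L + 1)) ℂ :=
  (Pm q L C n).map (Polynomial.eval x)

/-- The coefficients `α_t(m,n)` of the weight. -/
def alphaC (q : ℂ) (L m n t : ℕ) : ℂ :=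
  q ^ (2 * (n : ℤ) * ((L : ℤ) + 1) - (n : ℤ) ^ 2 - (2 * (L : ℤ) + 3) * (t : ℤ) + (t : ℤ) ^ 2 -
      (L : ℤ) + (m : ℤ)) *
    ((1 - q ^ (2 * (L : ℤ) + 2)) / (1 - q ^ (2 * (m : ℤ) + 2))) *
    (qp (q ^ 2) (q ^ 2) (L - n) * qp (q ^ 2) (q ^ 2) n / qp (q ^ 2) (q ^ 2) L) *
    ((-1 : ℂ) ^ ((m : ℤ) - (t : ℤ)) * qp (q ^ (2 * (m : ℤ) - 2 * (L : ℤ))) (q ^ 2) (n - t) /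
      qp (q ^ (2 * (m : ℤ) + 4)) (q ^ 2) (n - t)) *
    (qp (q ^ (2 * (L : ℤ) + 4 - 2 * (t : ℤ))) (q ^ 2) t / qp (q ^ 2) (q ^ 2) t)

/-- The matrix weight `W(x)`. -/
def Wm (q : ℂ) (L : ℕ) (x : ℂ) : Matrix (Fin (L + 1)) (Fin (L + 1)) ℂ :=
  Matrix.of fun i j =>
    ∑ t ∈ Finset.range (max (i : ℕ) (j : ℕ) + 1),
      alphaC q L (min (i : ℕ) (j : ℕ)) (max (i : ℕ) (j : ℕ)) t *
        (Polynomial.Chebyshev.U ℂ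
            ((min (i : ℕ) (j : ℕ) : ℤ) + (max (i : ℕ) (j : ℕ) : ℤ) - 2 * (t : ℤ))).eval x

/-- The antidiagonal involution `J`. -/
def Jm (L : ℕ) : Matrix (Fin (L + 1)) (Fin (L + 1)) ℂ :=
  Matrix.of fun i j => if (i : ℕ) + (j : ℕ) = L then 1 else 0

/-- The diagonal leading-coefficient matrix `Γ_n`. -/
def Gam (q : ℂ) (L n : ℕ) : Matrix (Fin (L + 1)) (Fin (L + 1)) ℂ :=
  Matrix.diagonal fun i =>
    2 ^ n * q ^ n * qp (q ^ (2 * ((i : ℕ) : ℤ) + 2)) (q ^ 2) n *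
        qp (q ^ (2 * (L : ℤ) - 2 * ((i : ℕ) : ℤ) + 2)) (q ^ 2) n /
      (qp (q ^ 2) (q ^ 2) n * qp (q ^ (2 * (L : ℤ) + 4)) (q ^ 2) n)

/-- The squared-norm matrix `G_m`. -/
def Gmat (q : ℂ) (L m : ℕ) : Matrix (Fin (L + 1)) (Fin (L + 1)) ℂ :=
  Matrix.diagonal fun i =>
    q ^ (2 * (m : ℤ) - (L : ℤ)) * (1 - q ^ (2 * (L : ℤ) + 2)) ^ 2 /
      ((1 - q ^ (2 * (m : ℤ) + 2 * ((i : ℕ) : ℤ) + 2)) *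
        (1 - q ^ (2 * (L : ℤ) - 2 * ((i : ℕ) : ℤ) + 2 * (m : ℤ) + 2)))

/-- The unipotent lower triangular matrix `L(x)` of the LDU decomposition. -/
def Lm (q : ℂ) (L : ℕ) (C : ℂ → ℂ → ℕ → Polynomial ℂ) (x : ℂ) :
    Matrix (Fin (L + 1)) (Fin (L + 1)) ℂ :=
  Matrix.of fun m k =>
    if (k : ℕ) ≤ (m : ℕ) then
      q ^ (((m : ℕ) : ℤ) - ((k : ℕ) : ℤ)) * qp (q ^ 2) (q ^ 2) (m : ℕ) *
          qp (q ^ 2) (q ^ 2) (2 * (k : ℕ) + 1) /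
          (qp (q ^ 2) (q ^ 2) ((m : ℕ) + (k : ℕ) + 1) * qp (q ^ 2) (q ^ 2) (k : ℕ)) *
        (C (q ^ 2) (q ^ (2 * (k : ℕ) + 2)) ((m : ℕ) - (k : ℕ))).eval x
    else 0

/-- The claimed inverse of `L(x)`. -/
def Linv (q : ℂ) (L : ℕ) (C : ℂ → ℂ → ℕ → Polynomial ℂ) (x : ℂ) :
    Matrix (Fin (L + 1)) (Fin (L + 1)) ℂ :=
  Matrix.of fun k n =>
    if (n : ℕ) ≤ (k : ℕ) then
      q ^ ((2 * ((k : ℕ) : ℤ) + 1) * (((k : ℕ) : ℤ) - ((n : ℕ) : ℤ))) *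
          qp (q ^ 2) (q ^ 2) (k : ℕ) * qp (q ^ 2) (q ^ 2) ((k : ℕ) + (n : ℕ)) /
          (qp (q ^ 2) (q ^ 2) (2 * (k : ℕ)) * qp (q ^ 2) (q ^ 2) (n : ℕ)) *
        (C (q ^ 2) (q ^ (-(2 * ((k : ℕ) : ℤ)))) ((k : ℕ) - (n : ℕ))).eval x
    else 0

/-- The constants `c_k(ℓ)`. -/
def ckC (q : ℂ) (L k : ℕ) : ℂ :=
  q ^ (-(L : ℤ)) / 4 * (1 - q ^ (4 * k + 2)) * qp (q ^ 2) (q ^ 2) (L + k + 1) *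
      qp (q ^ 2) (q ^ 2) (L - k) * qp (q ^ 2) (q ^ 2) k ^ 4 /
    (qp (q ^ 2) (q ^ 2) (2 * k + 1) ^ 2 * qp (q ^ 2) (q ^ 2) L ^ 2)

/-- The diagonal part `T(x)` of the LDU decomposition. -/
def Tm (q : ℂ) (L : ℕ) (x : ℂ) : Matrix (Fin (L + 1)) (Fin (L + 1)) ℂ :=
  Matrix.diagonal fun k =>
    ckC q L (k : ℕ) *
      (4 * ∏ j ∈ Finset.Icc 1 (k : ℕ), (1 - 2 * (2 * x ^ 2 - 1) * q ^ (2 * j) + q ^ (4 * j)))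

/-- The coefficient matrix `M₁(z)` of the q-difference operator `D₁`. -/
def M1f (q : ℂ) (L : ℕ) (z : ℂ) : Matrix (Fin (L + 1)) (Fin (L + 1)) ℂ :=
  Matrix.of fun i j =>
    if (j : ℕ) = (i : ℕ) + 1 then
      -(q ^ (1 - ((i : ℕ) : ℤ)) * (1 - q ^ (2 * (i : ℕ) + 2)) / (1 - q ^ 2) ^ 2 *
        (z / (1 - z ^ 2)))
    else if (j : ℕ) = (i : ℕ) then
      q ^ (1 - ((i : ℕ) : ℤ)) / (1 - q ^ 2) ^ 2 *
        ((1 - q ^ (2 * (i : ℕ) + 2) * z ^ 2) / (1 - z ^ 2))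
    else 0

/-- `M₂(z) = J M₁(z) J`. -/
def M2f (q : ℂ) (L : ℕ) (z : ℂ) : Matrix (Fin (L + 1)) (Fin (L + 1)) ℂ :=
  Jm L * M1f q L z * Jm L

/-- The eigenvalue matrix `Λ_n(1)`. -/
def Lam1 (q : ℂ) (L n : ℕ) : Matrix (Fin (L + 1)) (Fin (L + 1)) ℂ :=
  Matrix.diagonal fun j =>
    (q ^ (-((j : ℕ) : ℤ) - (n : ℤ) - 1) + q ^ (((j : ℕ) : ℤ) + (n : ℤ) + 1)) / (q⁻¹ - q) ^ 2

/-- The eigenvalue matrix `Λ_n(2) = J Λ_n(1) J`. -/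
def Lam2 (q : ℂ) (L n : ℕ) : Matrix (Fin (L + 1)) (Fin (L + 1)) ℂ :=
  Jm L * Lam1 q L n * Jm L

/-- The diagonal coefficient matrix `K₁(z)` of the decoupled operator. -/
def K1f (q : ℂ) (L : ℕ) (z : ℂ) : Matrix (Fin (L + 1)) (Fin (L + 1)) ℂ :=
  Matrix.diagonal fun i =>
    q ^ (1 - ((i : ℕ) : ℤ)) / (1 - q ^ 2) ^ 2 *
      ((1 - q ^ (2 * (i : ℕ) + 2) * z ^ 2) / (1 - z ^ 2))

/-- The symmetric Laurent polynomial `Ĉ_k(z;β|p)`. -/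
def Chat (p β : ℂ) (k : ℕ) (z : ℂ) : ℂ :=
  ∑ r ∈ Finset.range (k + 1),
    qp β p r * qp β p (k - r) / (qp p p r * qp p p (k - r)) * z ^ ((k : ℤ) - 2 * (r : ℤ))

/-- The matrix polynomials `R_n(x) = L(x)ᵀ P_n(x) Γ_n⁻¹`. -/
def Rmat (q : ℂ) (L : ℕ) (C : ℂ → ℂ → ℕ → Polynomial ℂ) (n : ℕ) (x : ℂ) :
    Matrix (Fin (L + 1)) (Fin (L + 1)) ℂ :=
  (Lm q L C x)ᵀ * evP q L C n x * (Gam q L n)⁻¹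

/-!
At `x = (q + q⁻¹) / 2` the row sums of `Linv`, the closed form of `L(x)⁻¹`, are `1, 0, …, 0`.
Since `P_n(x) = (L(x)⁻¹)ᵀ D_n(x)`, where the entries of `D_n(x)` are multiples of single
`q`-ultraspherical polynomials, the column sums of `P_n(x)` are the entries of the first row of
`D_n(x)`. These only involve `C_N(x; q² | q²)`, a Chebyshev polynomial of the second kind, whose
value at `x` is essentially a geometric sum.

The `k`-th row sum of `L(x)⁻¹` is, with `p = q²` and `c_r = (p^{-k};p)_r / (p;p)_r`, a multiple of
`∑ c_r p^{kr} c_u p^{(k+1)u} (p^{k+1-r-u};p)_k` over `r + u ≤ k`; the summand vanishes for all other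
`r, u ≤ k`, so both indices may run freely up to `k`. By the `q`-binomial theorem the sum over `u`
does not depend on `r`, and `∑_r c_r p^{kr} = 0` for `k > 0`.
-/

section QPochhammer

variable {a p : ℂ}

@[simp]
theorem qp_zero (a p : ℂ) : qp a p 0 = 1 :=
  prod_range_zero _

theorem qp_succ (a p : ℂ) (n : ℕ) : qp a p (n + 1) = qp a p n * (1 - a * p ^ n) :=
  prod_range_succ _ _

theorem qp_add (a p : ℂ) (m n : ℕ) : qp a p (m + n) = qp a p m * qp (a * p ^ m) p n := by
  simp only [qp, prod_range_add, pow_add, mul_assoc]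

theorem qp_succ_left (a p : ℂ) (n : ℕ) : qp a p (n + 1) = (1 - a) * qp (a * p) p n := by
  rw [add_comm, qp_add, qp_succ, qp_zero, pow_zero, pow_one, one_mul, mul_one]

theorem qp_eq_zero {n j : ℕ} (hj : j < n) (h : a * p ^ j = 1) : qp a p n = 0 :=
  prod_eq_zero (mem_range.2 hj) (by rw [h, sub_self])

theorem qp_self_ne_zero (hp : ¬IsOfFinOrder p) (n : ℕ) : qp p p n ≠ 0 := by
  refine prod_ne_zero_iff.2 fun j _ h ↦ hp ?_
  rw [isOfFinOrder_iff_pow_eq_one]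
  exact ⟨j + 1, j.succ_pos, by rw [pow_succ', ← sub_eq_zero.1 h]⟩

theorem qp_self_add_div (hp : ¬IsOfFinOrder p) (m n : ℕ) :
    qp p p (m + n) / qp p p m = qp (p ^ (m + 1)) p n := by
  rw [qp_add, mul_div_cancel_left₀ _ (qp_self_ne_zero hp m), pow_succ']

theorem qp_self_div_qp_sq_mul_geom_sum (hp : ¬IsOfFinOrder p) (n : ℕ) :
    qp p p n / qp (p ^ 2) p n * ∑ j ∈ range (n + 1), p ^ j = 1 := by
  have hsucc : qp p p (n + 1) = (1 - p) * qp (p ^ 2) p n := by rw [qp_succ_left, sq]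
  have hne := hsucc ▸ qp_self_ne_zero hp (n + 1)
  have hgeom : qp p p n * ∑ j ∈ range (n + 1), p ^ j = qp (p ^ 2) p n := by
    apply mul_left_cancel₀ (left_ne_zero_of_mul hne)
    rw [← hsucc, qp_succ, ← pow_succ', ← geom_sum_mul_neg]
    ring
  rw [div_mul_eq_mul_div, hgeom, div_self (right_ne_zero_of_mul hne)]

end QPochhammer

section QBinomial

/-- The coefficient `(a;p)_r / (p;p)_r` of `w ^ r` in the `q`-binomial series, that is, in the
expansion of `(a w;p)_∞ / (w;p)_∞`. -/
def qBinomialCoeff (a p : ℂ) (r : ℕ) : ℂ :=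
  qp a p r / qp p p r

variable {p : ℂ}

@[simp]
theorem qBinomialCoeff_zero (a p : ℂ) : qBinomialCoeff a p 0 = 1 := by
  simp [qBinomialCoeff]

theorem qBinomialCoeff_self (hp : ¬IsOfFinOrder p) (r : ℕ) : qBinomialCoeff p p r = 1 :=
  div_self (qp_self_ne_zero hp r)

theorem qBinomialCoeff_inv_pow_eq_zero (hp0 : p ≠ 0) {k r : ℕ} (h : k < r) :
    qBinomialCoeff (p ^ k)⁻¹ p r = 0 := by
  rw [qBinomialCoeff, qp_eq_zero h (inv_mul_cancel₀ (pow_ne_zero k hp0)), zero_div]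

theorem qBinomialCoeff_succ (hp : ¬IsOfFinOrder p) (a : ℂ) (r : ℕ) :
    qBinomialCoeff a p (r + 1) =
      qBinomialCoeff (a * p) p (r + 1) - a * qBinomialCoeff (a * p) p r := by
  have hne := qp_succ p p r ▸ qp_self_ne_zero hp (r + 1)
  have hr := left_ne_zero_of_mul hne
  have hlast := right_ne_zero_of_mul hne
  simp only [qBinomialCoeff, qp_succ_left a, qp_succ (a * p), qp_succ p]
  field_simp
  ring

theorem sum_qBinomialCoeff_mul_pow (hp0 : p ≠ 0) (hp : ¬IsOfFinOrder p) (k : ℕ) (w : ℂ) :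
    ∑ r ∈ range (k + 1), qBinomialCoeff (p ^ k)⁻¹ p r * w ^ r =
      qp ((p ^ k)⁻¹ * w) p k := by
  induction k with
  | zero => simp
  | succ k ih =>
    set b := (p ^ (k + 1))⁻¹ with hb
    have hbp : b * p = (p ^ k)⁻¹ := by rw [hb, pow_succ]; field_simp
    have hshift : ∑ r ∈ range (k + 1),
        qBinomialCoeff (p ^ k)⁻¹ p (r + 1) * w ^ (r + 1) + 1 = qp ((p ^ k)⁻¹ * w) p k := by
      have h := sum_range_succ' (fun r ↦ qBinomialCoeff (p ^ k)⁻¹ p r * w ^ r) (k + 1)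
      rw [sum_range_succ, qBinomialCoeff_inv_pow_eq_zero hp0 k.lt_succ_self, zero_mul,
        add_zero, ih, qBinomialCoeff_zero, pow_zero, mul_one] at h
      exact h.symm
    calc ∑ r ∈ range (k + 1 + 1), qBinomialCoeff b p r * w ^ r
        = (∑ r ∈ range (k + 1), qBinomialCoeff (p ^ k)⁻¹ p (r + 1) * w ^ (r + 1) + 1) -
            b * w * ∑ r ∈ range (k + 1), qBinomialCoeff (p ^ k)⁻¹ p r * w ^ r := by
          rw [sum_range_succ', mul_sum, add_sub_right_comm,
            ← sum_sub_distrib, qBinomialCoeff_zero, pow_zero, mul_one]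
          congr! 2 with r
          rw [qBinomialCoeff_succ hp, hbp]
          ring
      _ = qp (b * w) p (k + 1) := by
          rw [hshift, ih, qp_succ_left, mul_right_comm b w p, hbp]
          ring

theorem sum_qBinomialCoeff_mul_pow_eq_zero (hp0 : p ≠ 0) (hp : ¬IsOfFinOrder p) {k e : ℕ}
    (he0 : 0 < e) (hek : e ≤ k) :
    ∑ r ∈ range (k + 1), qBinomialCoeff (p ^ k)⁻¹ p r * (p ^ e) ^ r = 0 := by
  rw [sum_qBinomialCoeff_mul_pow hp0 hp]
  refine qp_eq_zero (Nat.sub_lt_self he0 hek) ?_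
  rw [mul_assoc, ← pow_add, Nat.add_sub_cancel' hek, inv_mul_cancel₀ (pow_ne_zero k hp0)]

/-- Expanding `(b p^{-u};p)_k` in powers of `p^{-u}`, only the constant term contributes. -/
theorem sum_qBinomialCoeff_mul_qp (hp0 : p ≠ 0) (hp : ¬IsOfFinOrder p) (k : ℕ) (b : ℂ) :
    ∑ u ∈ range (k + 1),
      qBinomialCoeff (p ^ k)⁻¹ p u * (p ^ (k + 1)) ^ u * qp (b * (p ^ u)⁻¹) p k = qp p p k := by
  set c := qBinomialCoeff (p ^ k)⁻¹ p
  have hexpand (u : ℕ) : qp (b * (p ^ u)⁻¹) p k =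
      ∑ d ∈ range (k + 1), c d * (p ^ k * (b * (p ^ u)⁻¹)) ^ d := by
    rw [sum_qBinomialCoeff_mul_pow hp0 hp, inv_mul_cancel_left₀ (pow_ne_zero k hp0)]
  have hmoment (d : ℕ) (hd : d ≤ k + 1) (u : ℕ) :
      (p ^ (k + 1)) ^ u * ((p ^ u)⁻¹) ^ d = (p ^ (k + 1 - d)) ^ u := by
    rw [pow_sub₀ p hp0 hd, mul_pow, ← inv_pow, ← inv_pow, ← pow_mul, ← pow_mul, ← pow_mul,
      mul_comm u d]
  calc ∑ u ∈ range (k + 1), c u * (p ^ (k + 1)) ^ u * qp (b * (p ^ u)⁻¹) p k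
      = ∑ d ∈ range (k + 1), c d * (p ^ k * b) ^ d *
          ∑ u ∈ range (k + 1), c u * (p ^ (k + 1 - d)) ^ u := by
        simp_rw [hexpand, mul_sum]
        rw [sum_comm]
        refine sum_congr rfl fun d hd ↦ sum_congr rfl fun u _ ↦ ?_
        rw [← hmoment d (mem_range.1 hd).le]
        ring
    _ = ∑ u ∈ range (k + 1), c u * (p ^ (k + 1)) ^ u := by
        rw [sum_eq_single 0]
        · simp [c]
        · intro d hd hd0
          have hdk := mem_range.1 hd
          rw [sum_qBinomialCoeff_mul_pow_eq_zero hp0 hp (by omega) (by omega), mul_zero]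
        · simp
    _ = qp p p k := by
        rw [sum_qBinomialCoeff_mul_pow hp0 hp, pow_succ, inv_mul_cancel_left₀ (pow_ne_zero k hp0)]

theorem sum_qp_mul_qBinomialCoeff_convolution (hp0 : p ≠ 0) (hp : ¬IsOfFinOrder p) {k : ℕ}
    (hk : 0 < k) :
    ∑ s ∈ range (k + 1), qp (p ^ (k + 1) * (p ^ s)⁻¹) p k *
      ∑ r ∈ range (s + 1), qBinomialCoeff (p ^ k)⁻¹ p r * (p ^ k) ^ r *
        (qBinomialCoeff (p ^ k)⁻¹ p (s - r) * (p ^ (k + 1)) ^ (s - r)) = 0 := by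
  set c := qBinomialCoeff (p ^ k)⁻¹ p
  let F (r u : ℕ) : ℂ := c r * (p ^ k) ^ r *
    (c u * (p ^ (k + 1)) ^ u * qp (p ^ (k + 1) * (p ^ r)⁻¹ * (p ^ u)⁻¹) p k)
  have hvanish {r u : ℕ} (hr : r ≤ k) (hu : u ≤ k) (hru : k < r + u) : F r u = 0 := by
    have hqp : qp (p ^ (k + 1) * (p ^ r)⁻¹ * (p ^ u)⁻¹) p k = 0 := by
      refine qp_eq_zero (j := r + u - (k + 1)) (by omega) ?_
      have hpow : p ^ (k + 1) * p ^ (r + u - (k + 1)) = p ^ r * p ^ u := by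
        rw [← pow_add, ← pow_add, Nat.add_sub_cancel' hru]
      field_simp
      exact hpow
    simp only [F, hqp, mul_zero]
  calc _ = ∑ s ∈ range (k + 1), ∑ r ∈ range (s + 1), F r (s - r) := by
        refine sum_congr rfl fun s _ ↦ ?_
        rw [mul_sum]
        refine sum_congr rfl fun r hr ↦ ?_
        simp only [F]
        rw [mul_assoc _ (p ^ r)⁻¹, ← mul_inv, ← pow_add,
          Nat.add_sub_cancel' (Nat.lt_succ_iff.1 (mem_range.1 hr))]
        ring
    _ = ∑ r ∈ range (k + 1), ∑ u ∈ range (k + 1 - r), F r u :=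
        sum_range_diag_flip _ _
    _ = ∑ r ∈ range (k + 1), ∑ u ∈ range (k + 1), F r u := by
        refine sum_congr rfl fun r hr ↦
          sum_subset (range_mono (Nat.sub_le _ _)) fun u hu hu' ↦ ?_
        simp only [mem_range] at hr hu hu'
        exact hvanish (by omega) (by omega) (by omega)
    _ = (∑ r ∈ range (k + 1), c r * (p ^ k) ^ r) * qp p p k := by
        simp only [F, ← mul_sum, ← sum_mul, c, sum_qBinomialCoeff_mul_qp hp0 hp]
    _ = 0 := by rw [sum_qBinomialCoeff_mul_pow_eq_zero hp0 hp hk le_rfl, zero_mul]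

end QBinomial

section Ultraspherical

theorem IsUltra.eval_eq_Chat {C : ℂ → ℂ → ℕ → Polynomial ℂ} (hC : IsUltra C) (p β : ℂ) (n : ℕ)
    {z : ℂ} (hz : z ≠ 0) : (C p β n).eval ((z + z⁻¹) / 2) = Chat p β n z :=
  (hC p β n).2 z hz

theorem Chat_zero (p β z : ℂ) : Chat p β 0 z = 1 := by
  simp [Chat]

variable {q : ℂ}

theorem pow_mul_Chat (hq0 : q ≠ 0) (β : ℂ) (k s : ℕ) :
    q ^ ((2 * k + 1) * s) * Chat (q ^ 2) β s q =
      ∑ r ∈ range (s + 1), qBinomialCoeff β (q ^ 2) r * ((q ^ 2) ^ k) ^ r *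
        (qBinomialCoeff β (q ^ 2) (s - r) * ((q ^ 2) ^ (k + 1)) ^ (s - r)) := by
  rw [Chat, mul_sum]
  refine sum_congr rfl fun r hr ↦ ?_
  obtain ⟨u, rfl⟩ := Nat.exists_eq_add_of_le (Nat.lt_succ_iff.1 (mem_range.1 hr))
  have hpow : q ^ ((2 * k + 1) * (r + u)) * q ^ (((r + u : ℕ) : ℤ) - 2 * r) =
      ((q ^ 2) ^ k) ^ r * ((q ^ 2) ^ (k + 1)) ^ u := by
    rw [← pow_mul, ← pow_mul, ← pow_mul, ← pow_mul, ← pow_add, ← zpow_natCast, ← zpow_natCast,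
      ← zpow_add₀ hq0]
    congr 1
    push_cast
    ring
  rw [Nat.add_sub_cancel_left, qBinomialCoeff, qBinomialCoeff]
  linear_combination (qp β (q ^ 2) r * qp β (q ^ 2) u / (qp (q ^ 2) (q ^ 2) r *
    qp (q ^ 2) (q ^ 2) u)) * hpow

theorem pow_mul_Chat_self (hq0 : q ≠ 0) (hq : ¬IsOfFinOrder (q ^ 2)) (N : ℕ) :
    q ^ N * Chat (q ^ 2) (q ^ 2) N q = ∑ j ∈ range (N + 1), (q ^ 2) ^ j := by
  have h := pow_mul_Chat hq0 (q ^ 2) 0 N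
  simp only [qBinomialCoeff_self hq, mul_zero, zero_add, one_mul, pow_zero, one_pow, pow_one] at h
  rw [h]
  exact sum_range_reflect _ (N + 1)

end Ultraspherical

section ColumnSums

theorem sum_eq_sum_fin_ite {M : Type*} [AddCommMonoid M] {N : ℕ} {s : Finset ℕ} (hs : s ⊆ range N)
    (f : ℕ → M) : ∑ k ∈ s, f k = ∑ k : Fin N, if (k : ℕ) ∈ s then f k else 0 := by
  rw [Fin.sum_univ_eq_sum_range (fun k ↦ if k ∈ s then f k else 0), sum_ite_mem,
    inter_eq_right.2 hs]

variable {q : ℂ} {L : ℕ} {C : ℂ → ℂ → ℕ → Polynomial ℂ}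

theorem Linv_apply_of_le (hq0 : q ≠ 0) (hq : ¬IsOfFinOrder (q ^ 2)) (hC : IsUltra C)
    {k i : Fin (L + 1)} (hik : i ≤ k) :
    Linv q L C ((q + q⁻¹) / 2) k i =
      qp (q ^ 2) (q ^ 2) k / qp (q ^ 2) (q ^ 2) (2 * k) *
        (qp ((q ^ 2) ^ ((i : ℕ) + 1)) (q ^ 2) k *
          (q ^ ((2 * (k : ℕ) + 1) * ((k : ℕ) - i)) *
            Chat (q ^ 2) ((q ^ 2) ^ (k : ℕ))⁻¹ ((k : ℕ) - i) q)) := by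
  have hexp : q ^ ((2 * ((k : ℕ) : ℤ) + 1) * ((k : ℕ) - (i : ℕ))) =
      q ^ ((2 * (k : ℕ) + 1) * ((k : ℕ) - i)) := by
    rw [← zpow_natCast]
    push_cast [Nat.cast_sub (Fin.le_def.1 hik)]
    rfl
  have hβ : q ^ (-(2 * ((k : ℕ) : ℤ))) = ((q ^ 2) ^ (k : ℕ))⁻¹ := by
    rw [_root_.zpow_neg, ← pow_mul]
    norm_cast
  simp only [Linv, Matrix.of_apply, if_pos (Fin.le_def.1 hik), hexp, hβ, hC.eval_eq_Chat _ _ _ hq0]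
  rw [← qp_self_add_div hq, add_comm (k : ℕ)]
  ring

theorem Linv_apply_of_lt {k i : Fin (L + 1)} (hki : k < i) (x : ℂ) : Linv q L C x k i = 0 :=
  if_neg (not_le.2 hki)

theorem sum_Linv_row (hq0 : q ≠ 0) (hq : ¬IsOfFinOrder (q ^ 2)) (hC : IsUltra C)
    (k : Fin (L + 1)) :
    ∑ i, Linv q L C ((q + q⁻¹) / 2) k i =
      qp (q ^ 2) (q ^ 2) k / qp (q ^ 2) (q ^ 2) (2 * k) *
        ∑ s ∈ range ((k : ℕ) + 1), qp ((q ^ 2) ^ ((k : ℕ) + 1) * ((q ^ 2) ^ s)⁻¹) (q ^ 2) k *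
          (q ^ ((2 * (k : ℕ) + 1) * s) * Chat (q ^ 2) ((q ^ 2) ^ (k : ℕ))⁻¹ s q) := by
  rw [← sum_range_reflect, mul_sum, sum_eq_sum_fin_ite (range_mono k.isLt)]
  refine sum_congr rfl fun i _ ↦ ?_
  split_ifs with hi
  · have hik : (i : ℕ) ≤ k := Nat.lt_succ_iff.1 (mem_range.1 hi)
    rw [Linv_apply_of_le hq0 hq hC hik, Nat.add_sub_cancel,
      ← pow_sub₀ _ (pow_ne_zero 2 hq0) (by omega),
      show (k : ℕ) + 1 - (k - i) = i + 1 by omega]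
  · exact Linv_apply_of_lt (by simpa [Nat.lt_succ_iff] using hi) _

theorem Linv_mulVec_one (hq0 : q ≠ 0) (hq : ¬IsOfFinOrder (q ^ 2)) (hC : IsUltra C) :
    Linv q L C ((q + q⁻¹) / 2) *ᵥ 1 = Pi.single 0 1 := by
  ext k
  simp only [mulVec, dotProduct_one]
  rw [sum_Linv_row hq0 hq hC]
  obtain rfl | hk := eq_or_ne k 0
  · simp [Chat_zero]
  · simp only [pow_mul_Chat hq0]
    rw [sum_qp_mul_qBinomialCoeff_convolution (pow_ne_zero 2 hq0) hq
      (Nat.pos_of_ne_zero (Fin.val_ne_zero_iff.2 hk)), mul_zero, Pi.single_eq_of_ne hk]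

/-- The matrix `D_n(x) = L(x)ᵀ P_n(x)` in closed form: the factor of `P_n(x) = (L(x)⁻¹)ᵀ D_n(x)`
that carries the `q`-Racah polynomials. For `n + j < k`, where the subtraction `n + j - k`
truncates, the entry is zero because of its factor `(q^{-2j-2n};q²)_k`. -/
def decoupledP (q : ℂ) (L : ℕ) (C : ℂ → ℂ → ℕ → Polynomial ℂ) (n : ℕ) (x : ℂ) :
    Matrix (Fin (L + 1)) (Fin (L + 1)) ℂ :=
  Matrix.of fun k j =>
    (-1 : ℂ) ^ (k : ℕ) *
      q ^ ((n : ℤ) + ((j : ℕ) : ℤ) * (2 * ((k : ℕ) : ℤ) + 1) +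
        2 * ((k : ℕ) : ℤ) * ((L : ℤ) + (n : ℤ) + 1) - ((k : ℕ) : ℤ) ^ 2) *
      (qp (q ^ (-(2 * (L : ℤ)))) (q ^ 2) k *
          qp (q ^ (-(2 * ((j : ℕ) : ℤ) + 2 * (n : ℤ)))) (q ^ 2) k /
        (qp (q ^ 2) (q ^ 2) k * qp (q ^ (2 * (L : ℤ) + 4)) (q ^ 2) k)) *
      (qp (q ^ 2) (q ^ 2) (n + j - k) /
        qp (q ^ (4 * ((k : ℕ) : ℤ) + 4)) (q ^ 2) (n + j - k)) *
      qRacah (q ^ 2) 1 1 (q ^ (-(2 * (n : ℤ) + 2 * ((j : ℕ) : ℤ) + 2)))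
        (q ^ (-(2 * (L : ℤ) + 2))) k j *
      (C (q ^ 2) (q ^ (2 * ((k : ℕ) : ℤ) + 2)) (n + j - k)).eval x

theorem decoupledP_apply_of_lt (hq0 : q ≠ 0) {n : ℕ} {k j : Fin (L + 1)} (h : n + j < (k : ℕ))
    (x : ℂ) : decoupledP q L C n x k j = 0 := by
  have hqp : qp (q ^ (-(2 * ((j : ℕ) : ℤ) + 2 * (n : ℤ)))) (q ^ 2) k = 0 := by
    refine qp_eq_zero h ?_
    rw [← pow_mul, ← zpow_natCast, ← zpow_add₀ hq0, ← zpow_zero q]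
    congr 1
    push_cast
    ring
  simp only [decoupledP, Matrix.of_apply, hqp, mul_zero, zero_div, zero_mul]

theorem evP_eq_transpose_Linv_mul (hq0 : q ≠ 0) (n : ℕ) (x : ℂ) :
    evP q L C n x = (Linv q L C x)ᵀ * decoupledP q L C n x := by
  ext i j
  have hsub : Icc (i : ℕ) (min L (n + j)) ⊆ range (L + 1) := fun k hk ↦
    mem_range.2 (Nat.lt_succ_of_le ((mem_Icc.1 hk).2.trans (min_le_left _ _)))
  simp only [evP, Pm, Matrix.map_apply, Matrix.of_apply, eval_finsetSum, eval_mul, eval_C,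
    Matrix.mul_apply, Matrix.transpose_apply]
  rw [sum_eq_sum_fin_ite hsub]
  refine sum_congr rfl fun k _ ↦ ?_
  split_ifs with hk
  · have hik : (i : ℕ) ≤ k := (mem_Icc.1 hk).1
    have hexp (a b c d e : ℤ) : q ^ (a + b + c + d - e) = q ^ b * q ^ (a + c + d - e) := by
      rw [← zpow_add₀ hq0]
      congr 1
      ring
    simp only [Linv, decoupledP, Matrix.of_apply, if_pos hik, hexp]
    ring
  · obtain hki | hnk : (k : ℕ) < i ∨ n + j < (k : ℕ) := by
      by_contra! h
      exact hk (mem_Icc.2 ⟨h.1, le_min (Nat.le_of_lt_succ k.isLt) h.2⟩)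
    · rw [Linv_apply_of_lt hki, zero_mul]
    · rw [decoupledP_apply_of_lt hq0 hnk, mul_zero]

theorem decoupledP_zero_apply (hq0 : q ≠ 0) (hq : ¬IsOfFinOrder (q ^ 2)) (hC : IsUltra C) (n : ℕ)
    (j : Fin (L + 1)) : decoupledP q L C n ((q + q⁻¹) / 2) 0 j = 1 := by
  have hN : q ^ ((n : ℤ) + (j : ℕ)) = q ^ (n + j : ℕ) := by norm_cast
  have h2 : q ^ (2 : ℤ) = q ^ 2 := by norm_cast
  have h4 : q ^ (4 : ℤ) = (q ^ 2) ^ 2 := by rw [← pow_mul]; norm_cast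
  calc decoupledP q L C n ((q + q⁻¹) / 2) 0 j
      = q ^ (n + j : ℕ) * (qp (q ^ 2) (q ^ 2) (n + j) / qp ((q ^ 2) ^ 2) (q ^ 2) (n + j)) *
          Chat (q ^ 2) (q ^ 2) (n + j) q := by
        simp [decoupledP, qRacah, hC.eval_eq_Chat _ _ _ hq0, hN, h2, h4]
    _ = 1 := by
        rw [mul_right_comm, pow_mul_Chat_self hq0 hq, mul_comm, qp_self_div_qp_sq_mul_geom_sum hq]

end ColumnSums

theorem stmt11_general (q : ℂ) (hq0 : q ≠ 0) (hq : ¬IsOfFinOrder q) (L : ℕ)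
    (C : ℂ → ℂ → ℕ → Polynomial ℂ) (hC : IsUltra C) (n : ℕ) (m : Fin (L + 1)) :
    ∑ k : Fin (L + 1), evP q L C n ((q + q⁻¹) / 2) k m = 1 := by
  have hq2 : ¬IsOfFinOrder (q ^ 2) := fun h ↦ hq (h.of_pow two_ne_zero)
  set x := (q + q⁻¹) / 2
  calc ∑ k, evP q L C n x k m
      = (1 ᵥ* evP q L C n x) m := by simp only [vecMul, one_dotProduct]
    _ = ((Linv q L C x *ᵥ 1) ᵥ* decoupledP q L C n x) m := by
        rw [evP_eq_transpose_Linv_mul hq0, ← vecMul_vecMul, vecMul_transpose]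
    _ = decoupledP q L C n x 0 m := by
        rw [Linv_mulVec_one hq0 hq2 hC, single_one_vecMul]
        rfl
    _ = 1 := decoupledP_zero_apply hq0 hq2 hC n m

/-- the column sums of `P_n` at `(q+q⁻¹)/2` equal one. -/
theorem stmt11 (q : ℝ) (hq0 : 0 < q) (hq1 : q < 1) (L : ℕ)
    (C : ℂ → ℂ → ℕ → Polynomial ℂ) (hC : IsUltra C) (n : ℕ) (m : Fin (L + 1)) :
    ∑ k : Fin (L + 1), evP (q : ℂ) L C n (((q : ℂ) + (q : ℂ)⁻¹) / 2) k m = 1 := by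
  have hq : ¬IsOfFinOrder (q : ℂ) := fun h ↦
    hq1.ne (Complex.norm_of_nonneg hq0.le ▸ h.norm_eq_one)
  exact stmt11_general q (Complex.ofReal_ne_zero.2 hq0.ne') hq L C hC n m

end
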